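/- For every ε > 0 there exists C > 0 such that, for p ≥ C log n / n, the binomial random graph G = G_{n,p} asymptotically almost surely satisfies the following: for every i with εn ≤ i < n/2 there exist a partition of the vertex set V into disjoint sets X and Y with |X| = i and |Y| = n − i, and a subgraph H ⊆ G consisting of all edges of G with one endpoint in X and the other in Y, such that d_H(x) ≤ (n−i)p + εnp for all x ∈ X, d_H(y) ≤ ip + εnp for all y ∈ Y, and G ∖ H is not Hamiltonian (indeed it is disconnected). -/

import Mathlib

/-!
Fix for every `i` any set `X` of `i` vertices. Deleting all edges of `G` between `X` and its
complement disconnects `G`, so only the degree bounds need randomness.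

The degree of a vertex `v` into the other side of the cut is the number of edges of `G_{n,p}` inside
a fixed star `F` with `m ≤ n` edges. Its moment generating function is `(1 - p + p e^t)^m`, so by
Markov's inequality it exceeds `m p + 2 t n p` with probability at most `exp (-t² n p)` when
`0 ≤ t ≤ 1`. For `2 t ≤ ε` and `p ≥ 3 log n / (t² n)` this is at most `n⁻³`, which survives the
union bound over the at most `n²` pairs of a cut and a vertex.
-/

open Filter Real

namespace Resilience

variable {V : Type*}

/-- The degree of a vertex, as the cardinality of its neighbourhood. -/
noncomputable def deg (G : SimpleGraph V) (v : V) : ℕ := (G.neighborSet v).ncard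

/-- The neighbourhood of a set of vertices: all vertices with a neighbour in `X`. -/
def nbhd (G : SimpleGraph V) (X : Set V) : Set V := {v | ∃ x ∈ X, G.Adj v x}

/-- The minimum degree over a set of vertices. -/
noncomputable def minDeg (G : SimpleGraph V) (X : Set V) : ℕ :=
  sInf ((fun v => deg G v) '' X)

/-- The number of edges of `G` with one endpoint in `X` and the other in `Y`. -/
noncomputable def eBetween (G : SimpleGraph V) (X Y : Set V) : ℕ :=
  {e ∈ G.edgeSet | ∃ x ∈ X, ∃ y ∈ Y, e = s(x, y)}.ncard

/-- The number of edges of `G` with both endpoints in `A`. -/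
noncomputable def eIn (G : SimpleGraph V) (A : Set V) : ℕ :=
  {e ∈ G.edgeSet | ∀ v ∈ e, v ∈ A}.ncard

/-- The graph on `V` whose edges are the consecutive pairs of the list `l`;
this lets us view a path, recorded as a list of distinct vertices, as a graph. -/
def listGraph (l : List V) : SimpleGraph V :=
  SimpleGraph.fromEdgeSet {e | ∃ q ∈ l.zip l.tail, e = s(q.1, q.2)}

/-- `l` is a (nonempty) path on `V` all of whose edges lie in `G`. -/
def IsPathOn (G : SimpleGraph V) (l : List V) : Prop :=
  l ≠ [] ∧ l.Nodup ∧ l.Chain' G.Adj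

/-- `l` is a longest path with all edges in `G`. -/
def IsLongestPathOn (G : SimpleGraph V) (l : List V) : Prop :=
  IsPathOn G l ∧ ∀ l' : List V, IsPathOn G l' → l'.length ≤ l.length

/-- `l'` is obtained from the path `l` (with fixed last endpoint) by a single rotation
within `G`, whose broken edge lies on the original path `P`.  Writing
`l = a :: t₁ ++ c :: b :: t₂`, the pivot is `b`, the new edge is `ab ∈ G`, the broken
edge is `cb` (an edge of `P`), and the rotated path is `(a :: t₁ ++ [c]).reverse ++ b :: t₂`. -/
def IsRotation (G : SimpleGraph V) (P l l' : List V) : Prop :=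
  ∃ (a c b : V) (t₁ t₂ : List V),
    l = a :: t₁ ++ c :: b :: t₂ ∧ G.Adj a b ∧ (listGraph P).Adj c b ∧
    l' = (a :: t₁ ++ [c]).reverse ++ b :: t₂

/-- The set of paths obtainable from `P` by at most `t` successive rotations within `G`
with fixed last endpoint, all broken edges lying on `P`. -/
def rotSet (G : SimpleGraph V) (P : List V) : ℕ → Set (List V)
  | 0 => {P}
  | t + 1 => rotSet G P t ∪ {l' | ∃ l ∈ rotSet G P t, IsRotation G P l l'}

/-- `R^t_{G,P,u}`: the set of endpoints of paths obtainable from `P` by at most `t`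
successive rotations within `G` with fixed last endpoint. -/
def Rset (G : SimpleGraph V) (P : List V) (t : ℕ) : Set V :=
  {x | ∃ l ∈ rotSet G P t, l.head? = some x}

/-- The family `H^ε_{n,p}` of Pósa-type subgraphs: there is an ordering of the vertices
with non-increasing degrees such that `d_H(v_i) ≤ (n-i)p - εnp` for all `i < n/2`
(1-based indexing). -/
def PosaFamily (n : ℕ) (p ε : ℝ) (H : SimpleGraph (Fin n)) : Prop :=
  ∃ v : Fin n → Fin n, Function.Bijective v ∧
    (∀ i j : Fin n, i ≤ j → deg H (v j) ≤ deg H (v i)) ∧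
    ∀ i : Fin n, ((i.1 : ℝ) + 1) < n / 2 →
      (deg H (v i) : ℝ) ≤ ((n : ℝ) - ((i.1 : ℝ) + 1)) * p - ε * n * p

/-- The family `H^{ε,δ}_{n,p}` of (shifted) Chvátal-type subgraphs, where the shift
`δn` is recorded as a natural number `s`: there is an ordering of the vertices with
non-increasing degrees such that for all `i < n/2` (1-based indexing), either
`d_H(v_i) ≤ (n-i)p - εnp` or `d_H(v_{n-i-s}) ≤ ip - εnp`. -/
def ChvatalFamily (n : ℕ) (p ε : ℝ) (s : ℕ) (H : SimpleGraph (Fin n)) : Prop :=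
  ∃ v : Fin n → Fin n, Function.Bijective v ∧
    (∀ i j : Fin n, i ≤ j → deg H (v j) ≤ deg H (v i)) ∧
    ∀ i : Fin n, ((i.1 : ℝ) + 1) < n / 2 →
      ((deg H (v i) : ℝ) ≤ ((n : ℝ) - ((i.1 : ℝ) + 1)) * p - ε * n * p ∨
       (deg H (v ⟨n - (i.1 + 1) - s - 1, by have := i.2; omega⟩) : ℝ) ≤
         ((i.1 : ℝ) + 1) * p - ε * n * p)

/-- The probability weight of a fixed graph `G` in the binomial random graph `G_{n,p}`. -/
noncomputable def weight (n : ℕ) (p : ℝ) (G : SimpleGraph (Fin n)) : ℝ :=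
  p ^ G.edgeSet.ncard * (1 - p) ^ (n.choose 2 - G.edgeSet.ncard)

open Classical in
/-- The probability that the binomial random graph `G_{n,p}` satisfies the property `Q`. -/
noncomputable def Pr (n : ℕ) (p : ℝ) (Q : SimpleGraph (Fin n) → Prop) : ℝ :=
  ∑ G : SimpleGraph (Fin n), if Q G then weight n p G else 0

/-- Property `RE(δ)` for a (connected) graph `G` on `n` vertices: for every path `P`
on the vertex set, either `G ∪ P` has a longer path, or there are at least `δn` vertices
`v`, each with a set `T v` of at least `δn` vertices `w`, such that `G ∪ P` has a path
from `v` to `w` with the same vertex set as `P`. -/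
def RE (n : ℕ) (δ : ℝ) (G : SimpleGraph (Fin n)) : Prop :=
  G.Connected ∧
  ∀ P : List (Fin n), P ≠ [] → P.Nodup →
    (∃ Q : List (Fin n), IsPathOn (G ⊔ listGraph P) Q ∧ P.length < Q.length) ∨
    (∃ S : Set (Fin n), δ * n ≤ S.ncard ∧
      ∃ T : Fin n → Set (Fin n), (∀ v ∈ S, δ * n ≤ (T v).ncard) ∧
        ∀ v ∈ S, ∀ w ∈ T v, ∃ Q : List (Fin n),
          IsPathOn (G ⊔ listGraph P) Q ∧ Q.head? = some v ∧ Q.getLast? = some w ∧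
          Q.toFinset = P.toFinset)

/-- `G₂` complements `G₁` (with respect to parameter `δ` as in `RE(δ)`): for every path
`P` on the vertex set, either `G₁ ∪ P` has a longer path, or there are sets `S`, `T v`
as in the definition of `RE(δ)` together with `v ∈ S` and `w ∈ T v` such that `vw` is an
edge of `G₁ ∪ G₂`. -/
def Complements (n : ℕ) (δ : ℝ) (G₁ G₂ : SimpleGraph (Fin n)) : Prop :=
  ∀ P : List (Fin n), P ≠ [] → P.Nodup →
    (∃ Q : List (Fin n), IsPathOn (G₁ ⊔ listGraph P) Q ∧ P.length < Q.length) ∨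
    (∃ S : Set (Fin n), δ * n ≤ S.ncard ∧
      ∃ T : Fin n → Set (Fin n), (∀ v ∈ S, δ * n ≤ (T v).ncard) ∧
        (∀ v ∈ S, ∀ w ∈ T v, ∃ Q : List (Fin n),
          IsPathOn (G₁ ⊔ listGraph P) Q ∧ Q.head? = some v ∧ Q.getLast? = some w ∧
          Q.toFinset = P.toFinset) ∧
        ∃ v ∈ S, ∃ w ∈ T v, (G₁ ⊔ G₂).Adj v w)

/-! ### The binomial random graph -/

section RandomGraph

open Classical in
lemma sum_edgeFinset_eq_sum_powerset [Fintype V] [DecidableEq V] {M : Type*} [AddCommMonoid M]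
    (f : Finset (Sym2 V) → M) :
    ∑ G : SimpleGraph V, f G.edgeFinset =
      ∑ S ∈ (⊤ : SimpleGraph V).edgeFinset.powerset, f S := by
  refine Finset.sum_bij (fun G _ => G.edgeFinset)
    (fun G _ => Finset.mem_powerset.2 (SimpleGraph.edgeFinset_mono le_top))
    (fun G _ H _ h => SimpleGraph.edgeFinset_inj.1 h) (fun S hS => ?_) fun _ _ => rfl
  refine ⟨SimpleGraph.fromEdgeSet S, Finset.mem_univ _, ?_⟩
  have hdiag : Disjoint (S : Set (Sym2 V)) Sym2.diagSet := Set.disjoint_left.2 fun e he => by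
    simpa using Finset.mem_powerset.1 hS he
  rw [← Finset.coe_inj, SimpleGraph.coe_edgeFinset, SimpleGraph.edgeSet_fromEdgeSet,
    hdiag.sdiff_eq_left]

variable {n : ℕ} {p : ℝ}

lemma weight_nonneg (hp0 : 0 ≤ p) (hp1 : p ≤ 1) (G : SimpleGraph (Fin n)) : 0 ≤ weight n p G :=
  mul_nonneg (pow_nonneg hp0 _) (pow_nonneg (sub_nonneg.2 hp1) _)

open Classical in
lemma sum_weight_mul_prod (n : ℕ) (p : ℝ) (f : Sym2 (Fin n) → ℝ) :
    ∑ G : SimpleGraph (Fin n), weight n p G * ∏ e ∈ G.edgeFinset, f e =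
      ∏ e ∈ (⊤ : SimpleGraph (Fin n)).edgeFinset, (p * f e + (1 - p)) := by
  rw [Finset.prod_add, ← sum_edgeFinset_eq_sum_powerset fun S => (∏ e ∈ S, p * f e) *
    ∏ e ∈ (⊤ : SimpleGraph (Fin n)).edgeFinset \ S, (1 - p)]
  refine Finset.sum_congr rfl fun G _ => ?_
  have hcompl : ((⊤ : SimpleGraph (Fin n)).edgeFinset \ G.edgeFinset).card =
      n.choose 2 - G.edgeFinset.card := by
    rw [Finset.card_sdiff_of_subset (SimpleGraph.edgeFinset_mono le_top),
      SimpleGraph.card_edgeFinset_top_eq_card_choose_two, Fintype.card_fin]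
  rw [weight, ← SimpleGraph.coe_edgeFinset, Set.ncard_coe_finset, Finset.prod_mul_distrib,
    Finset.prod_const, Finset.prod_const, hcompl]
  ring

lemma sum_weight (n : ℕ) (p : ℝ) : ∑ G : SimpleGraph (Fin n), weight n p G = 1 := by
  simpa using sum_weight_mul_prod n p 1

lemma Pr_mono (hp0 : 0 ≤ p) (hp1 : p ≤ 1) {Q R : SimpleGraph (Fin n) → Prop}
    (hQR : ∀ G, Q G → R G) : Pr n p Q ≤ Pr n p R := by
  refine Finset.sum_le_sum fun G _ => ?_
  have hw := weight_nonneg hp0 hp1 G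
  split_ifs with hQ hR
  exacts [le_rfl, absurd (hQR G hQ) hR, hw, le_rfl]

lemma Pr_exists_le_sum (hp0 : 0 ≤ p) (hp1 : p ≤ 1) {ι : Type*} [Fintype ι]
    (Q : ι → SimpleGraph (Fin n) → Prop) :
    Pr n p (fun G => ∃ i, Q i G) ≤ ∑ i, Pr n p (Q i) := by
  classical
  unfold Pr
  rw [Finset.sum_comm]
  refine Finset.sum_le_sum fun G _ => ?_
  have hterm (i : ι) : 0 ≤ if Q i G then weight n p G else 0 :=
    ite_nonneg (weight_nonneg hp0 hp1 G) le_rfl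
  split_ifs with h
  · obtain ⟨i, hi⟩ := h
    simpa only [if_pos hi] using
      Finset.single_le_sum (fun j _ => hterm j) (Finset.mem_univ i)
  · exact Finset.sum_nonneg fun i _ => hterm i

lemma Pr_not (Q : SimpleGraph (Fin n) → Prop) : Pr n p (fun G => ¬ Q G) = 1 - Pr n p Q := by
  rw [← sum_weight n p, Pr, Pr, ← Finset.sum_sub_distrib]
  refine Finset.sum_congr rfl fun G _ => ?_
  by_cases h : Q G <;> simp [h]

lemma one_sub_sum_le_Pr_forall (hp0 : 0 ≤ p) (hp1 : p ≤ 1) {ι : Type*} [Fintype ι]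
    (Q : ι → SimpleGraph (Fin n) → Prop) :
    1 - ∑ i, Pr n p (fun G => ¬ Q i G) ≤ Pr n p (fun G => ∀ i, Q i G) := by
  have hunion := Pr_exists_le_sum hp0 hp1 fun i G => ¬ Q i G
  simp only [← not_forall, Pr_not fun G => ∀ i, Q i G] at hunion
  linarith

lemma Pr_le_sum_weight_mul (hp0 : 0 ≤ p) (hp1 : p ≤ 1) {Q : SimpleGraph (Fin n) → Prop}
    {f : SimpleGraph (Fin n) → ℝ} (hf : ∀ G, 0 ≤ f G) (hQ : ∀ G, Q G → 1 ≤ f G) :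
    Pr n p Q ≤ ∑ G, weight n p G * f G := by
  refine Finset.sum_le_sum fun G _ => ?_
  have hw := weight_nonneg hp0 hp1 G
  split_ifs with h
  · exact le_mul_of_one_le_right hw (hQ G h)
  · exact mul_nonneg hw (hf G)

end RandomGraph

/-! ### The number of random edges in a fixed graph -/

section EdgeCount

variable {n : ℕ} {p t : ℝ}

lemma sum_weight_mul_exp (p t : ℝ) (F : SimpleGraph (Fin n)) :
    ∑ G : SimpleGraph (Fin n), weight n p G * exp (t * (G ⊓ F).edgeSet.ncard) =
      (1 - p + p * exp t) ^ F.edgeSet.ncard := by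
  classical
  have hcount (G : SimpleGraph (Fin n)) : exp (t * (G ⊓ F).edgeSet.ncard) =
      ∏ e ∈ G.edgeFinset, if e ∈ F.edgeFinset then exp t else 1 := by
    rw [Finset.prod_ite_mem, Finset.prod_const, ← SimpleGraph.edgeFinset_inf,
      ← SimpleGraph.coe_edgeFinset, Set.ncard_coe_finset, mul_comm, exp_nat_mul]
  have hfactor (e : Sym2 (Fin n)) : p * (if e ∈ F.edgeFinset then exp t else 1) + (1 - p) =
      if e ∈ F.edgeFinset then 1 - p + p * exp t else 1 := by
    split_ifs <;> ring
  simp only [hcount, sum_weight_mul_prod, hfactor]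
  rw [Finset.prod_ite_mem, Finset.inter_eq_right.2 (SimpleGraph.edgeFinset_mono le_top),
    Finset.prod_const, ← SimpleGraph.coe_edgeFinset, Set.ncard_coe_finset]

lemma sum_weight_mul_exp_le (hp0 : 0 ≤ p) (hp1 : p ≤ 1) (ht : |t| ≤ 1)
    (F : SimpleGraph (Fin n)) :
    ∑ G : SimpleGraph (Fin n), weight n p G * exp (t * (G ⊓ F).edgeSet.ncard) ≤
      exp (F.edgeSet.ncard * (p * (t + t ^ 2))) := by
  have hexp : exp t - 1 - t ≤ t ^ 2 := by
    simpa only [sq_abs] using (le_abs_self _).trans (abs_exp_sub_one_sub_id_le ht)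
  have hbase : 1 - p + p * exp t ≤ exp (p * (t + t ^ 2)) :=
    calc 1 - p + p * exp t = p * (exp t - 1) + 1 := by ring
      _ ≤ p * (t + t ^ 2) + 1 := by gcongr; linarith
      _ ≤ exp (p * (t + t ^ 2)) := add_one_le_exp _
  rw [sum_weight_mul_exp, exp_nat_mul]
  exact pow_le_pow_left₀ (add_nonneg (sub_nonneg.2 hp1) (by positivity)) hbase _

lemma Pr_lt_ncard_edgeSet_inf_le (hp0 : 0 ≤ p) (hp1 : p ≤ 1) (ht0 : 0 ≤ t) (ht1 : t ≤ 1)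
    (F : SimpleGraph (Fin n)) {M : ℝ} (hM : F.edgeSet.ncard ≤ M) :
    Pr n p (fun G => F.edgeSet.ncard * p + 2 * t * M * p < (G ⊓ F).edgeSet.ncard) ≤
      exp (-(t ^ 2 * (M * p))) := by
  set m : ℝ := (F.edgeSet.ncard : ℝ)
  set a : ℝ := m * p + 2 * t * M * p
  calc Pr n p (fun G => a < (G ⊓ F).edgeSet.ncard)
      ≤ ∑ G, weight n p G * exp (t * (G ⊓ F).edgeSet.ncard - t * a) :=
        Pr_le_sum_weight_mul hp0 hp1 (fun _ => (exp_pos _).le) fun G hG => one_le_exp <|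
          sub_nonneg.2 (mul_le_mul_of_nonneg_left hG.le ht0)
    _ = (∑ G, weight n p G * exp (t * (G ⊓ F).edgeSet.ncard)) * exp (-(t * a)) := by
        simp only [sub_eq_add_neg, exp_add, Finset.sum_mul, mul_assoc]
    _ ≤ exp (m * (p * (t + t ^ 2))) * exp (-(t * a)) := by
        gcongr
        exact sum_weight_mul_exp_le hp0 hp1 (abs_le.2 ⟨by linarith, ht1⟩) F
    _ = exp (t ^ 2 * (m * p) - 2 * (t ^ 2 * (M * p))) := by
        rw [← exp_add]
        congr 1
        ring
    _ ≤ exp (-(t ^ 2 * (M * p))) := by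
        have : t ^ 2 * (m * p) ≤ t ^ 2 * (M * p) := by gcongr
        exact exp_le_exp.2 (by linarith)

end EdgeCount

/-! ### Degrees into fixed graphs -/

section Degree

lemma ncard_edgeSet_inf_starGraph (K : SimpleGraph V) (v : V) :
    (K ⊓ SimpleGraph.starGraph v).edgeSet.ncard = deg K v := by
  have hstar : (K ⊓ SimpleGraph.starGraph v).edgeSet = K.incidenceSet v := by
    ext e
    induction e with
    | _ a b =>
      simp only [SimpleGraph.mem_edgeSet, SimpleGraph.inf_adj, SimpleGraph.starGraph_adj,
        SimpleGraph.mk'_mem_incidenceSet_iff]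
      grind [SimpleGraph.Adj.ne]
  classical
  rw [hstar, deg, ← Nat.card_coe_set_eq, ← Nat.card_coe_set_eq]
  exact Nat.card_congr (K.incidenceSetEquivNeighborSet v)

variable {n : ℕ} {p t : ℝ}

lemma Pr_lt_deg_inf_le (hp0 : 0 ≤ p) (hp1 : p ≤ 1) (ht0 : 0 ≤ t) (ht1 : t ≤ 1)
    (K : SimpleGraph (Fin n)) (v : Fin n) :
    Pr n p (fun G => deg K v * p + 2 * t * n * p < deg (G ⊓ K) v) ≤
      exp (-(t ^ 2 * (n * p))) := by
  have hdeg : (deg K v : ℝ) ≤ n := mod_cast (Set.ncard_le_card _).trans_eq (Nat.card_fin n)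
  simp only [← ncard_edgeSet_inf_starGraph, inf_assoc] at hdeg ⊢
  exact Pr_lt_ncard_edgeSet_inf_le hp0 hp1 ht0 ht1 _ hdeg

lemma one_sub_le_Pr_forall_deg_inf_le (hp0 : 0 ≤ p) (hp1 : p ≤ 1) (ht0 : 0 ≤ t) (ht1 : t ≤ 1)
    {ι : Type*} [Fintype ι] (K : ι → SimpleGraph (Fin n)) :
    1 - Fintype.card ι * n * exp (-(t ^ 2 * (n * p))) ≤
      Pr n p (fun G => ∀ i v,
        (deg (G ⊓ K i) v : ℝ) ≤ deg (K i) v * p + 2 * t * n * p) := by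
  have hunion := one_sub_sum_le_Pr_forall hp0 hp1 fun (a : ι × Fin n) G =>
    (deg (G ⊓ K a.1) a.2 : ℝ) ≤ deg (K a.1) a.2 * p + 2 * t * n * p
  simp only [not_le, Prod.forall] at hunion
  refine le_trans (sub_le_sub_left ?_ 1) hunion
  refine (Finset.sum_le_card_nsmul _ _ _ fun a _ =>
    Pr_lt_deg_inf_le hp0 hp1 ht0 ht1 (K a.1) a.2).trans_eq ?_
  simp

lemma exp_neg_le_inv_pow {x y : ℝ} (hx : 0 < x) {k : ℕ} (hxy : k * log x ≤ y) :
    exp (-y) ≤ (x ^ k)⁻¹ :=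
  calc exp (-y) ≤ exp (-(k * log x)) := exp_le_exp.2 (neg_le_neg hxy)
    _ = (x ^ k)⁻¹ := by rw [exp_neg, exp_nat_mul, exp_log hx]

theorem exists_le_Pr_forall_deg_inf_le {ε : ℝ} (hε : 0 < ε) :
    ∃ C : ℝ, 0 < C ∧ ∀ η : ℝ, 0 < η → ∃ N : ℕ, ∀ n : ℕ, N ≤ n →
      ∀ p : ℝ, C * log n / n ≤ p → p ≤ 1 → ∀ K : Fin n → SimpleGraph (Fin n),
        1 - η ≤ Pr n p (fun G => ∀ i v,
          (deg (G ⊓ K i) v : ℝ) ≤ deg (K i) v * p + ε * n * p) := by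
  set t : ℝ := min (ε / 2) 1
  have ht0 : 0 < t := lt_min (half_pos hε) one_pos
  have htε : 2 * t ≤ ε := by linarith [min_le_left (ε / 2) 1]
  refine ⟨3 / t ^ 2, by positivity, fun η hη => ?_⟩
  obtain ⟨N, hN⟩ := exists_nat_one_div_lt hη
  refine ⟨N + 1, fun n hn p hp hp1 K => ?_⟩
  have hn0 : (0 : ℝ) < n := mod_cast N.succ_pos.trans_le hn
  have hp0 : 0 ≤ p := le_trans (by positivity) hp
  have hlog : (3 : ℕ) * log n ≤ t ^ 2 * (n * p) := by
    rw [div_le_iff₀ hn0, div_mul_eq_mul_div, div_le_iff₀ (by positivity)] at hp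
    push_cast
    linarith
  have hfail : n * n * exp (-(t ^ 2 * (n * p))) ≤ η :=
    calc n * n * exp (-(t ^ 2 * (n * p))) ≤ n * n * ((n : ℝ) ^ 3)⁻¹ := by
          gcongr
          exact exp_neg_le_inv_pow hn0 hlog
      _ = 1 / n := by field_simp
      _ ≤ 1 / (N + 1) := one_div_le_one_div_of_le (by positivity) (mod_cast hn)
      _ ≤ η := hN.le
  have hunion := one_sub_le_Pr_forall_deg_inf_le hp0 hp1 ht0.le (min_le_right _ _) K
  rw [Fintype.card_fin] at hunion
  exact (sub_le_sub_left hfail 1).trans <| hunion.trans <|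
    Pr_mono hp0 hp1 fun G hG i v => (hG i v).trans (by gcongr)

end Degree

/-! ### Cuts -/

section Cut

open SimpleGraph

lemma top_inf_between (G : SimpleGraph V) (s t : Set V) :
    G ⊓ (⊤ : SimpleGraph V).between s t = G.between s t := by
  ext v w
  simp only [inf_adj, between_adj, top_adj]
  exact ⟨fun h => ⟨h.1, h.2.2⟩, fun h => ⟨h.1, h.1.ne, h.2⟩⟩

lemma deg_top_between_compl {s : Set V} {v : V} (hv : v ∈ s) :
    deg ((⊤ : SimpleGraph V).between s sᶜ) v = sᶜ.ncard := by
  rw [deg]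
  congr 1
  ext w
  simp only [mem_neighborSet, between_adj, top_adj, Set.mem_compl_iff]
  grind

lemma not_connected_sdiff_between_compl (G : SimpleGraph V) {s : Set V} (hs : s.Nonempty)
    (hsc : sᶜ.Nonempty) : ¬ (G \ G.between s sᶜ).Connected := by
  intro hconn
  obtain ⟨a, ha⟩ := hs
  obtain ⟨b, hb⟩ := hsc
  obtain ⟨walk⟩ := hconn.preconnected a b
  obtain ⟨d, -, hfst, hsnd⟩ := walk.exists_boundary_dart s ha hb
  have hadj := (sdiff_adj _ _ _ _).1 d.adj
  exact hadj.2 ⟨hadj.1, Or.inl ⟨hfst, hsnd⟩⟩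

theorem exists_cut_of_deg_inf_le [Fintype V] [DecidableEq V] (G : SimpleGraph V) {s : Set V}
    (hs : s.Nonempty) (hsc : sᶜ.Nonempty) {p c : ℝ}
    (hdeg : ∀ v, (deg (G ⊓ (⊤ : SimpleGraph V).between s sᶜ) v : ℝ) ≤
      deg ((⊤ : SimpleGraph V).between s sᶜ) v * p + c) :
    ∃ H : SimpleGraph V,
      (∀ v w, H.Adj v w ↔ (G.Adj v w ∧ ((v ∈ s ∧ w ∈ sᶜ) ∨ (v ∈ sᶜ ∧ w ∈ s)))) ∧
      (∀ x ∈ s, (deg H x : ℝ) ≤ sᶜ.ncard * p + c) ∧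
      (∀ y ∈ sᶜ, (deg H y : ℝ) ≤ s.ncard * p + c) ∧
      ¬ (G \ H).IsHamiltonian ∧ ¬ (G \ H).Connected := by
  have hdisc := not_connected_sdiff_between_compl G hs hsc
  simp only [top_inf_between] at hdeg
  refine ⟨G.between s sᶜ, fun _ _ => between_adj, fun x hx => ?_, fun y hy => ?_,
    fun h => hdisc h.connected, hdisc⟩
  · simpa only [deg_top_between_compl hx] using hdeg x
  · have hdegy := deg_top_between_compl hy
    rw [compl_compl, between_comm] at hdegy
    simpa only [hdegy] using hdeg y

end Cut

theorem extremal_construction_general (ε : ℝ) (hε : 0 < ε) :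
    ∃ C : ℝ, 0 < C ∧ ∀ η : ℝ, 0 < η → ∃ N : ℕ, ∀ n : ℕ, N ≤ n →
      ∀ p : ℝ, C * Real.log n / n ≤ p → p ≤ 1 →
        1 - η ≤ Pr n p (fun G =>
          ∀ i : ℕ, 0 < i → i < n →
            ∃ X Y : Set (Fin n), Disjoint X Y ∧ X ∪ Y = Set.univ ∧
              X.ncard = i ∧ Y.ncard = n - i ∧
              ∃ H : SimpleGraph (Fin n),
                (∀ v w : Fin n, H.Adj v w ↔
                  (G.Adj v w ∧ ((v ∈ X ∧ w ∈ Y) ∨ (v ∈ Y ∧ w ∈ X)))) ∧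
                (∀ x ∈ X, (deg H x : ℝ) ≤ ((n : ℝ) - i) * p + ε * n * p) ∧
                (∀ y ∈ Y, (deg H y : ℝ) ≤ (i : ℝ) * p + ε * n * p) ∧
                ¬ (G \ H).IsHamiltonian ∧ ¬ (G \ H).Connected) := by
  obtain ⟨C, hC, hdeg⟩ := exists_le_Pr_forall_deg_inf_le hε
  refine ⟨C, hC, fun η hη => (hdeg η hη).imp fun N hN n hn p hp hp1 => ?_⟩
  have hp0 : 0 ≤ p := le_trans (by positivity) hp
  let K (i : Fin n) : SimpleGraph (Fin n) := SimpleGraph.between (Set.Iio i) (Set.Iio i)ᶜ ⊤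
  refine (hN n hn p hp hp1 K).trans (Pr_mono hp0 hp1 fun G hG i hi hin => ?_)
  set X : Set (Fin n) := Set.Iio ⟨i, hin⟩
  have hX : X.ncard = i := by simp [X, Set.ncard_eq_toFinset_card']
  have hXc : Xᶜ.ncard = n - i := by rw [Set.ncard_compl, hX, Nat.card_fin]
  have hX_nonempty : X.Nonempty := Set.nonempty_of_ncard_ne_zero (by omega)
  have hXc_nonempty : Xᶜ.Nonempty := Set.nonempty_of_ncard_ne_zero (by omega)
  have hcut := exists_cut_of_deg_inf_le G hX_nonempty hXc_nonempty (hG ⟨i, hin⟩)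
  rw [hX, hXc, Nat.cast_sub hin.le] at hcut
  exact ⟨X, Xᶜ, disjoint_compl_right, Set.union_compl_self X, hX, hXc, hcut⟩

/-- the extremal construction.  For every `ε > 0` there exists
`C > 0` such that, for `p ≥ C log n / n`, a.a.s. for every `i` with `εn ≤ i < n/2`
there are a partition `V = X ∪ Y` with `|X| = i`, `|Y| = n − i` and the bipartite
subgraph `H` of `G` between `X` and `Y` satisfying `d_H(x) ≤ (n−i)p + εnp` for
`x ∈ X`, `d_H(y) ≤ ip + εnp` for `y ∈ Y`, and `G ∖ H` is not Hamiltonian (indeed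
disconnected). -/
theorem extremal_construction (ε : ℝ) (hε : 0 < ε) :
    ∃ C : ℝ, 0 < C ∧ ∀ η : ℝ, 0 < η → ∃ N : ℕ, ∀ n : ℕ, N ≤ n →
      ∀ p : ℝ, C * Real.log n / n ≤ p → p ≤ 1 →
        1 - η ≤ Pr n p (fun G =>
          ∀ i : ℕ, ε * n ≤ (i : ℝ) → (i : ℝ) < n / 2 →
            ∃ X Y : Set (Fin n), Disjoint X Y ∧ X ∪ Y = Set.univ ∧
              X.ncard = i ∧ Y.ncard = n - i ∧
              ∃ H : SimpleGraph (Fin n),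
                (∀ v w : Fin n, H.Adj v w ↔
                  (G.Adj v w ∧ ((v ∈ X ∧ w ∈ Y) ∨ (v ∈ Y ∧ w ∈ X)))) ∧
                (∀ x ∈ X, (deg H x : ℝ) ≤ ((n : ℝ) - i) * p + ε * n * p) ∧
                (∀ y ∈ Y, (deg H y : ℝ) ≤ (i : ℝ) * p + ε * n * p) ∧
                ¬ (G \ H).IsHamiltonian ∧ ¬ (G \ H).Connected) := by
  obtain ⟨C, hC, hgen⟩ := extremal_construction_general ε hε
  refine ⟨C, hC, fun η hη => (hgen η hη).imp fun N hN n hn p hp hp1 =>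
    (hN n hn p hp hp1).trans (Pr_mono (le_trans (by positivity) hp) hp1
      fun G hG i hi hin => hG i ?_ ?_)⟩
  all_goals have hn0 : (0 : ℝ) < n := by linarith [i.cast_nonneg (α := ℝ)]
  · exact_mod_cast (mul_pos hε hn0).trans_le hi
  · exact_mod_cast hin.trans (half_lt_self hn0)

end Resilience
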